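/- Let S be a free schema. (1) If a Herbrand interpretation i maps only finitely many predicate terms to true, then the path π_S(i,e) is finite. (2) If moreover S is predicate-linear and a Herbrand interpretation j maps only finitely many predicate terms q(t⃗), with q a while predicate of S, to true, then the path π_S(j,e) is finite. -/

import Mathlib

/-!
Two facts combine.

* In a free schema no predicate term is tested twice along a path (`nodup_tests`): at the second
  test both outcomes continue to a prefix of a complete path (`toggle`), so one of them contradicts
  the outcome of the first test and is realised by no Herbrand interpretation.
* A run of any schema that does not terminate performs arbitrarily many tests of while predicates
  with outcome `true` (`terminates_or_long`), by structural induction on the schema.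

Hence a nonterminating run of a free schema makes infinitely many *distinct* predicate terms
`q(t⃗)`, with `q` a while predicate, true. This yields both parts.
-/

/-!
Common formalization of program schemas (Danicic–Hierons–Laurence):
letters/paths, Herbrand semantics, freeness, liberality, subschemas,
data/control dependence, Weiser's set `Need`, slices and couples.
Function symbols, predicate symbols, variables and labels are all
modelled by `ℕ` (function and predicate symbols kept disjoint by
construction of the syntax).
-/

namespace SchemaSlicing

/-- Letters of the alphabet Λ(S): assignment letters `y := f^(l)(args)` and
predicate letters `⟨p^(l)(args), b⟩`. -/
inductive Letter : Type
  | asn (y : ℕ) (f : ℕ) (l : ℕ) (args : List ℕ)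
  | prd (p : ℕ) (l : ℕ) (args : List ℕ) (b : Bool)
  deriving DecidableEq

/-- Program schemas. -/
inductive Schema : Type
  | skip
  | assign (y : ℕ) (f : ℕ) (l : ℕ) (args : List ℕ)
  | seq (S₁ S₂ : Schema)
  | ite (p : ℕ) (l : ℕ) (args : List ℕ) (Tt Tf : Schema)
  | whil (p : ℕ) (l : ℕ) (args : List ℕ) (body : Schema)

/-- Complete paths of a while loop iterated `n` times. -/
def whileIter (p l : ℕ) (args : List ℕ) (B : Set (List Letter)) : ℕ → Set (List Letter)
  | 0 => {[Letter.prd p l args false]}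
  | n + 1 => {σ | ∃ x ∈ B, ∃ y ∈ whileIter p l args B n, σ = Letter.prd p l args true :: (x ++ y)}

/-- The set Π(S) of complete paths through a schema. -/
def Paths : Schema → Set (List Letter)
  | .skip => {[]}
  | .assign y f l args => {[Letter.asn y f l args]}
  | .seq S₁ S₂ => {σ | ∃ x ∈ Paths S₁, ∃ y ∈ Paths S₂, σ = x ++ y}
  | .ite p l args Tt Tf =>
      {σ | (∃ x ∈ Paths Tt, σ = Letter.prd p l args true :: x) ∨
           (∃ x ∈ Paths Tf, σ = Letter.prd p l args false :: x)}
  | .whil p l args body => {σ | ∃ n, σ ∈ whileIter p l args (Paths body) n}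

/-- pre(Π(S)): finite prefixes of complete paths. -/
def PrePaths (S : Schema) : Set (List Letter) := {σ | ∃ τ, σ <+: τ ∧ τ ∈ Paths S}

/-- μ is a path-segment of S. -/
def PathSegment (S : Schema) (μ : List Letter) : Prop := ∃ a b, a ++ μ ++ b ∈ Paths S

/-- μ is a terminal path-segment of S. -/
def TerminalSegment (S : Schema) (μ : List Letter) : Prop := ∃ a, a ++ μ ∈ Paths S

/-- An interpretation over a domain `D`. -/
structure Interp (D : Type) where
  fn : ℕ → List D → D
  pr : ℕ → List D → Bool

/-- One execution step on states. -/
def stepL {D : Type} (I : Interp D) (d : ℕ → D) : Letter → (ℕ → D)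
  | .asn y f _ args => Function.update d y (I.fn f (args.map d))
  | .prd _ _ _ _ => d

/-- `M[σ]^I_d`: the state after executing the assignment letters of σ from d. -/
def execP {D : Type} (I : Interp D) (d : ℕ → D) (σ : List Letter) : ℕ → D :=
  σ.foldl (stepL I) d

/-- σ is consistent with the interpretation `I` from initial state `d`:
every predicate letter along σ is evaluated according to `I`. -/
def Agrees {D : Type} (I : Interp D) (d : ℕ → D) (σ : List Letter) : Prop :=
  ∀ τ p l args b, τ ++ [Letter.prd p l args b] <+: σ →
    I.pr p (args.map (execP I d τ)) = b

/-- σ is the (terminating) path `π_S(I,d)`. -/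
def TermRun {D : Type} (S : Schema) (I : Interp D) (d : ℕ → D) (σ : List Letter) : Prop :=
  σ ∈ Paths S ∧ Agrees I d σ

/-- `M[S]^I_d ≠ ⊥`. -/
def Terminates {D : Type} (S : Schema) (I : Interp D) (d : ℕ → D) : Prop :=
  ∃ σ, TermRun S I d σ

/-- Terms over function symbols and variables (the Herbrand domain). -/
inductive Trm : Type
  | var : ℕ → Trm
  | app : ℕ → List Trm → Trm

/-- A Herbrand interpretation is determined by its predicate part. -/
abbrev HInterp := ℕ → List Trm → Bool

/-- The Herbrand interpretation with predicate part `h`. -/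
def herb (h : HInterp) : Interp Trm := ⟨Trm.app, h⟩

/-- The natural state `e`. -/
def eSt : ℕ → Trm := Trm.var

/-- `M[σ]_e`: Herbrand execution of the assignment letters of σ from e. -/
def hexec (σ : List Letter) : ℕ → Trm := execP (herb fun _ _ => false) eSt σ

/-- σ is consistent with the Herbrand interpretation `i` from `e`. -/
def hAgrees (i : HInterp) (σ : List Letter) : Prop := Agrees (herb i) eSt σ

/-- A schema is free if every prefix of a complete path is a prefix of
`π_S(i,e)` for some Herbrand interpretation i. -/
def Free (S : Schema) : Prop := ∀ σ ∈ PrePaths S, ∃ i : HInterp, hAgrees i σ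

/-- A schema is liberal if along any executable path (from `e`, under a
Herbrand interpretation) no two assignments produce the same term. -/
def Liberal (S : Schema) : Prop :=
  ∀ (i : HInterp) (μ ν : List Letter) (y f l args w g m brgs),
    (μ ++ Letter.asn y f l args :: (ν ++ [Letter.asn w g m brgs])) ∈ PrePaths S →
    hAgrees i (μ ++ Letter.asn y f l args :: (ν ++ [Letter.asn w g m brgs])) →
    hexec (μ ++ [Letter.asn y f l args]) y ≠
      hexec (μ ++ Letter.asn y f l args :: (ν ++ [Letter.asn w g m brgs])) w

/-- Labelled symbols: labelled function symbols and labelled predicate symbols. -/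
inductive LSym : Type
  | fn (f l : ℕ)
  | pr (p l : ℕ)
  deriving DecidableEq

/-- The set of labelled symbols occurring in a schema. -/
def lsymSet : Schema → Set LSym
  | .skip => ∅
  | .assign _ f l _ => {LSym.fn f l}
  | .seq a b => lsymSet a ∪ lsymSet b
  | .ite p l _ t e => insert (LSym.pr p l) (lsymSet t ∪ lsymSet e)
  | .whil p l _ b => insert (LSym.pr p l) (lsymSet b)

/-- Number of occurrences of a labelled symbol in a schema. -/
def lsymCount : Schema → LSym → ℕ
  | .skip, _ => 0
  | .assign _ f l _, x => if x = LSym.fn f l then 1 else 0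
  | .seq a b, x => lsymCount a x + lsymCount b x
  | .ite p l _ t e, x => (if x = LSym.pr p l then 1 else 0) + lsymCount t x + lsymCount e x
  | .whil p l _ b, x => (if x = LSym.pr p l then 1 else 0) + lsymCount b x

/-- Standing convention: distinct occurrences of the same symbol carry distinct labels. -/
def WellLabelled (S : Schema) : Prop := ∀ x, lsymCount S x ≤ 1

/-- Number of occurrences of a predicate symbol in a schema. -/
def predCount : Schema → ℕ → ℕ
  | .skip, _ => 0
  | .assign _ _ _ _, _ => 0
  | .seq a b, p => predCount a p + predCount b p
  | .ite q _ _ t e, p => (if q = p then 1 else 0) + predCount t p + predCount e p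
  | .whil q _ _ b, p => (if q = p then 1 else 0) + predCount b p

/-- No predicate symbol occurs more than once. -/
def PredLinear (S : Schema) : Prop := ∀ p, predCount S p ≤ 1

/-- `Occurs T S`: T occurs as a subtree (statement) of S. -/
inductive Occurs : Schema → Schema → Prop
  | refl (S : Schema) : Occurs S S
  | seqL {S T U : Schema} : Occurs S T → Occurs S (.seq T U)
  | seqR {S T U : Schema} : Occurs S U → Occurs S (.seq T U)
  | iteT {S t e : Schema} {p l args} : Occurs S t → Occurs S (.ite p l args t e)
  | iteF {S t e : Schema} {p l args} : Occurs S e → Occurs S (.ite p l args t e)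
  | whilB {S b : Schema} {p l args} : Occurs S b → Occurs S (.whil p l args b)

/-- The schema contains an assignment to the variable v. -/
def AssignsTo : Schema → ℕ → Prop
  | .skip, _ => False
  | .assign y _ _ _, v => y = v
  | .seq a b, v => AssignsTo a v ∨ AssignsTo b v
  | .ite _ _ _ t e, v => AssignsTo t v ∨ AssignsTo e v
  | .whil _ _ _ b, v => AssignsTo b v

/-- The schema contains an assignment `v := f(...)`. -/
def AssignsWith : Schema → ℕ → ℕ → Prop
  | .skip, _, _ => False
  | .assign y g _ _, f, v => g = f ∧ y = v
  | .seq a b, f, v => AssignsWith a f v ∨ AssignsWith b f v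
  | .ite _ _ _ t e, f, v => AssignsWith t f v ∨ AssignsWith e f v
  | .whil _ _ _ b, f, v => AssignsWith b f v

/-- If a function symbol occurs in assignments in both parts of an if
predicate, then those assignments assign to distinct variables. -/
def IfPartsCondition (S : Schema) : Prop :=
  ∀ p l args t e, Occurs (Schema.ite p l args t e) S →
    ∀ f v, AssignsWith t f v → AssignsWith e f v → False

/-- Special schemas: (well-labelled,) predicate-linear, free, liberal,
satisfying the condition on the two parts of each if predicate. -/
def Special (S : Schema) : Prop :=
  WellLabelled S ∧ PredLinear S ∧ Free S ∧ Liberal S ∧ IfPartsCondition S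

/-- `Subschema T S`: T is obtained from S by deleting statements. -/
inductive Subschema : Schema → Schema → Prop
  | skip (S : Schema) : Subschema .skip S
  | refl (S : Schema) : Subschema S S
  | seqL (S₁ S₂ : Schema) : Subschema S₁ (.seq S₁ S₂)
  | seqR (S₁ S₂ : Schema) : Subschema S₂ (.seq S₁ S₂)
  | seqCongrL {S' S : Schema} (T : Schema) :
      Subschema S' S → Subschema (.seq S' T) (.seq S T)
  | seqCongrR {T' T : Schema} (S : Schema) :
      Subschema T' T → Subschema (.seq S T') (.seq S T)
  | whilCongr {T' T : Schema} (p l : ℕ) (args : List ℕ) :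
      Subschema T' T → Subschema (.whil p l args T') (.whil p l args T)
  | iteCongrT {T' T : Schema} (p l : ℕ) (args : List ℕ) (E : Schema) :
      Subschema T' T → Subschema (.ite p l args T' E) (.ite p l args T E)
  | iteCongrF {E' E : Schema} (p l : ℕ) (args : List ℕ) (T : Schema) :
      Subschema E' E → Subschema (.ite p l args T E') (.ite p l args T E)
  | trans {A B C : Schema} : Subschema A B → Subschema B C → Subschema A C

/-- T is a u-slice of S (u a variable): over every domain, state and
interpretation, if S terminates then T terminates with the same final value of u. -/
def IsUSlice (S T : Schema) (u : ℕ) : Prop :=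
  ∀ (D : Type) (I : Interp D) (d : ℕ → D),
    Terminates S I d →
      Terminates T I d ∧
      ∀ σ τ, TermRun S I d σ → TermRun T I d τ → execP I d σ u = execP I d τ u

/-- T is an ω-slice of S: S and T have the same termination behaviour. -/
def IsOmegaSlice (S T : Schema) : Prop :=
  ∀ (D : Type) (I : Interp D) (d : ℕ → D), Terminates S I d ↔ Terminates T I d

/-- `IsFTrm F t`: t is an F-term, for a (nonempty) word F of function symbols. -/
inductive IsFTrm : List ℕ → Trm → Prop
  | base (f : ℕ) (ts : List Trm) : IsFTrm [f] (.app f ts)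
  | step {F : List ℕ} {t : Trm} (g : ℕ) {ts : List Trm} :
      t ∈ ts → IsFTrm F t → IsFTrm (F ++ [g]) (.app g ts)

/-- `IsVFTrm v F t`: t is a vF-term. -/
inductive IsVFTrm (v : ℕ) : List ℕ → Trm → Prop
  | base : IsVFTrm v [] (.var v)
  | step {F : List ℕ} {t : Trm} (g : ℕ) {ts : List Trm} :
      t ∈ ts → IsVFTrm v F t → IsVFTrm v (F ++ [g]) (.app g ts)

/-- The function symbol f occurs in the term t. -/
inductive OccIn (f : ℕ) : Trm → Prop
  | here (ts : List Trm) : OccIn f (.app f ts)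
  | there {g : ℕ} {ts : List Trm} {t : Trm} : t ∈ ts → OccIn f t → OccIn f (.app g ts)

/-- Labelled terms: applications additionally record the label of the
assignment that created them. -/
inductive LTrm : Type
  | var : ℕ → LTrm
  | app : ℕ → ℕ → List LTrm → LTrm

def lStep (d : ℕ → LTrm) : Letter → (ℕ → LTrm)
  | .asn y f l args => Function.update d y (LTrm.app f l (args.map d))
  | .prd _ _ _ _ => d

/-- Labelled Herbrand execution from e. -/
def lexec (σ : List Letter) : ℕ → LTrm := σ.foldl lStep LTrm.var

/-- F-terms for words F of labelled function symbols. -/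
inductive IsFLTrm : List (ℕ × ℕ) → LTrm → Prop
  | base (f l : ℕ) (ts : List LTrm) : IsFLTrm [(f, l)] (.app f l ts)
  | step {F : List (ℕ × ℕ)} {t : LTrm} (g m : ℕ) {ts : List LTrm} :
      t ∈ ts → IsFLTrm F t → IsFLTrm (F ++ [(g, m)]) (.app g m ts)

/-- `f^(l) ⤳ u` for a variable u. -/
def DepFV (S : Schema) (fl : ℕ × ℕ) (u : ℕ) : Prop :=
  ∃ σ, TerminalSegment S σ ∧ IsFLTrm [fl] (lexec σ u)

/-- `f^(l) ⤳ g^(m)` for labelled function symbols. -/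
def DepFF (S : Schema) (fl gm : ℕ × ℕ) : Prop :=
  ∃ σ, PathSegment S σ ∧ ∃ w, IsFLTrm [fl, gm] (lexec σ w)

/-- `f^(l) ⤳ q^(m)` for a labelled predicate. -/
def DepFP (S : Schema) (fl : ℕ × ℕ) (q m : ℕ) : Prop :=
  ∃ σ args Z, PathSegment S (σ ++ [Letter.prd q m args Z]) ∧
    ∃ w ∈ args, IsFLTrm [fl] (lexec σ w)

/-- `f^(l) ⤳ x` for a labelled symbol x. -/
def DepFX (S : Schema) (fl : ℕ × ℕ) : LSym → Prop
  | .fn g m => DepFF S fl (g, m)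
  | .pr q m => DepFP S fl q m

/-- The labelled predicate `p^(l)` controls the labelled symbol x in S. -/
def ControlsL (S : Schema) (p l : ℕ) (x : LSym) : Prop :=
  (∃ args t e, Occurs (Schema.ite p l args t e) S ∧ (x ∈ lsymSet t ∨ x ∈ lsymSet e)) ∨
  (∃ args b, Occurs (Schema.whil p l args b) S ∧ x ∈ lsymSet b)

/-- `p^(l)` is a while predicate of S. -/
def IsWhilePred (S : Schema) (p l : ℕ) : Prop :=
  ∃ args b, Occurs (Schema.whil p l args b) S

/-- Slicing criteria: a variable, or termination (ω). -/
inductive Crit : Type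
  | var : ℕ → Crit
  | omega

/-- Weiser's labelled symbol set `Need_S(u)`. -/
inductive Need (S : Schema) : Crit → LSym → Prop
  | ofVar {v f l : ℕ} : DepFV S (f, l) v → Need S (.var v) (.fn f l)
  | ofOmega {p l : ℕ} : IsWhilePred S p l → Need S .omega (.pr p l)
  | ofDep {u : Crit} {f l : ℕ} {x : LSym} :
      Need S u x → DepFX S (f, l) x → Need S u (.fn f l)
  | ofControl {u : Crit} {p l : ℕ} {x : LSym} :
      Need S u x → ControlsL S p l x → Need S u (.pr p l)

/-- `{i,j}` is a p(ts)-couple: i and j differ at the predicate term p(ts)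
and agree on every other predicate term. -/
def PTCouple (p : ℕ) (ts : List Trm) (i j : HInterp) : Prop :=
  i p ts ≠ j p ts ∧ ∀ q ss, (q, ss) ≠ (p, ts) → i q ss = j q ss

/-- `{i,j}` is a p(ts)u-couple for S. -/
def PTUCouple (S : Schema) (p : ℕ) (ts : List Trm) (u : ℕ) (i j : HInterp) : Prop :=
  PTCouple p ts i j ∧
  ∃ σ τ, TermRun S (herb i) eSt σ ∧ TermRun S (herb j) eSt τ ∧ hexec σ u ≠ hexec τ u

/-- `{i,j}` is a pu-couple for S. -/
def PUCouple (S : Schema) (p u : ℕ) (i j : HInterp) : Prop :=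
  ∃ ts, PTUCouple S p ts u i j

/-- `{i,j}` is a pω-couple for S: a p-couple such that exactly one of the
two runs terminates. -/
def POmegaCouple (S : Schema) (p : ℕ) (i j : HInterp) : Prop :=
  ∃ ts, PTCouple p ts i j ∧
    Xor' (Terminates S (herb i) eSt) (Terminates S (herb j) eSt)

/-- A `p^(l)u`-couple for S presented with its divergence data: the common
prefix `head` (the head of the couple), the argument vector of `p^(l)` at the
divergence point, and the two tails. -/
def LPUCoupleData (S : Schema) (p l u : ℕ) (i j : HInterp)
    (head : List Letter) (args : List ℕ) (ρt ρf : List Letter) : Prop :=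
  PTCouple p (args.map (hexec head)) i j ∧
  TermRun S (herb i) eSt (head ++ Letter.prd p l args true :: ρt) ∧
  TermRun S (herb j) eSt (head ++ Letter.prd p l args false :: ρf) ∧
  hexec (head ++ Letter.prd p l args true :: ρt) u ≠
    hexec (head ++ Letter.prd p l args false :: ρf) u

/-- A (p,X)-link in S. -/
def PLink (S : Schema) (p : ℕ) (X : Bool) (ν : List Letter) : Prop :=
  (∃ l args t e, Occurs (Schema.ite p l args t e) S ∧
     ∃ π ∈ Paths (if X then t else e), ν = Letter.prd p l args X :: π) ∨
  (∃ l args b, Occurs (Schema.whil p l args b) S ∧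
     ((X = false ∧ ν = [Letter.prd p l args false]) ∨
      (X = true ∧ ∃ π ∈ Paths b, ∃ ρ ∈ Paths (Schema.whil p l args b),
        ν = Letter.prd p l args true :: (π ++ ρ))))

/-- The path-segment μ v-feeds p to q in S. -/
def VFeeds (S : Schema) (v p q : ℕ) (μ : List Letter) : Prop :=
  ∃ X ν, PLink S p X ν ∧ ∃ m args, PathSegment S (ν ++ μ ++ [Letter.prd q m args true]) ∧
    ∃ w ∈ args, ∃ F, IsVFTrm v F (hexec μ w)

/-- There is an assignment to v in the body (while) or in the true or
false part (if) of the predicate p in S. -/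
def AssignInPart (S : Schema) (p v : ℕ) : Prop :=
  (∃ l args t e, Occurs (Schema.ite p l args t e) S ∧ (AssignsTo t v ∨ AssignsTo e v)) ∨
  (∃ l args b, Occurs (Schema.whil p l args b) S ∧ AssignsTo b v)

/-- The (unlabelled) symbol of a letter (function symbols and predicate
symbols kept disjoint via a sum). -/
def symOf : Letter → Sum ℕ ℕ
  | .asn _ f _ _ => .inl f
  | .prd p _ _ _ => .inr p

/-- The labelled symbol of a letter. -/
def lsymOf : Letter → LSym
  | .asn _ f l _ => .fn f l
  | .prd p l _ _ => .pr p l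

/-- The vector of variables referenced by a letter. -/
def refsOf : Letter → List ℕ
  | .asn _ _ _ args => args
  | .prd _ _ args _ => args

/-- Statements of predicate-free schemas. -/
inductive PFStmt : Type
  | skip
  | asn (y : ℕ) (f : ℕ) (args : List ℕ)
  deriving DecidableEq

/-- A predicate-free schema is a finite sequence of skips and assignments. -/
abbrev PFS := List PFStmt

def pfStep (d : ℕ → Trm) : PFStmt → (ℕ → Trm)
  | .skip => d
  | .asn y f args => Function.update d y (Trm.app f (args.map d))

/-- Execution of a predicate-free schema from a state d. -/
def pfExecFrom (d : ℕ → Trm) (U : PFS) : ℕ → Trm := U.foldl pfStep d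

/-- `M[U]_e` for a predicate-free schema. -/
def pfExec (U : PFS) : ℕ → Trm := pfExecFrom eSt U

/-- A predicate-free schema is liberal: executed from e, no two of its
assignments produce equal term values. -/
def PFLiberal (U : PFS) : Prop :=
  ∀ A y f args B w g brgs C,
    U = A ++ PFStmt.asn y f args :: (B ++ PFStmt.asn w g brgs :: C) →
    pfExec (A ++ [PFStmt.asn y f args]) y ≠
      pfExec (A ++ PFStmt.asn y f args :: (B ++ [PFStmt.asn w g brgs])) w

end SchemaSlicing

namespace SchemaSlicing

/-! ### Complete paths and their prefixes -/

lemma paths_nonempty (S : Schema) : ∃ σ, σ ∈ Paths S := by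
  induction S with
  | skip => exact ⟨[], rfl⟩
  | assign y f l args => exact ⟨_, rfl⟩
  | seq A B hA hB =>
    obtain ⟨x, hx⟩ := hA
    obtain ⟨y, hy⟩ := hB
    exact ⟨x ++ y, x, hx, y, hy, rfl⟩
  | ite p l args A B hA hB =>
    obtain ⟨x, hx⟩ := hA
    exact ⟨_, Or.inl ⟨x, hx, rfl⟩⟩
  | whil p l args B hB => exact ⟨[Letter.prd p l args false], 0, rfl⟩

lemma nil_mem_prePaths (S : Schema) : [] ∈ PrePaths S := by
  obtain ⟨x, hx⟩ := paths_nonempty S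
  exact ⟨x, List.nil_prefix, hx⟩

lemma prePaths_seq_left {A B : Schema} {σ : List Letter} (h : σ ∈ PrePaths A) :
    σ ∈ PrePaths (.seq A B) := by
  obtain ⟨x, hσ, hx⟩ := h
  obtain ⟨y, hy⟩ := paths_nonempty B
  exact ⟨x ++ y, hσ.trans (List.prefix_append _ _), x, hx, y, hy, rfl⟩

lemma prePaths_seq_right {A B : Schema} {x σ : List Letter} (hx : x ∈ Paths A)
    (h : σ ∈ PrePaths B) : x ++ σ ∈ PrePaths (.seq A B) := by
  obtain ⟨y, hσ, hy⟩ := h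
  exact ⟨x ++ y, (List.prefix_append_right_inj x).2 hσ, x, hx, y, hy, rfl⟩

lemma prePaths_ite_true {p l : ℕ} {args : List ℕ} {A B : Schema} {σ : List Letter}
    (h : σ ∈ PrePaths A) : Letter.prd p l args true :: σ ∈ PrePaths (.ite p l args A B) := by
  obtain ⟨x, hσ, hx⟩ := h
  exact ⟨_, List.cons_prefix_cons.2 ⟨rfl, hσ⟩, Or.inl ⟨x, hx, rfl⟩⟩

lemma prePaths_ite_false {p l : ℕ} {args : List ℕ} {A B : Schema} {σ : List Letter}
    (h : σ ∈ PrePaths B) : Letter.prd p l args false :: σ ∈ PrePaths (.ite p l args A B) := by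
  obtain ⟨x, hσ, hx⟩ := h
  exact ⟨_, List.cons_prefix_cons.2 ⟨rfl, hσ⟩, Or.inr ⟨x, hx, rfl⟩⟩

lemma paths_whil_step {p l : ℕ} {args : List ℕ} {B : Schema} {x y : List Letter}
    (hx : x ∈ Paths B) (hy : y ∈ Paths (.whil p l args B)) :
    Letter.prd p l args true :: (x ++ y) ∈ Paths (.whil p l args B) := by
  obtain ⟨n, hn⟩ := hy
  exact ⟨n + 1, x, hx, y, hn, rfl⟩

lemma prePaths_whil_body {p l : ℕ} {args : List ℕ} {B : Schema} {σ : List Letter}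
    (h : σ ∈ PrePaths B) : Letter.prd p l args true :: σ ∈ PrePaths (.whil p l args B) := by
  obtain ⟨x, hσ, hx⟩ := h
  obtain ⟨y, hy⟩ := paths_nonempty (.whil p l args B)
  exact ⟨_, List.cons_prefix_cons.2 ⟨rfl, hσ.trans (List.prefix_append _ _)⟩,
    paths_whil_step hx hy⟩

lemma prePaths_whil_step {p l : ℕ} {args : List ℕ} {B : Schema} {x σ : List Letter}
    (hx : x ∈ Paths B) (h : σ ∈ PrePaths (.whil p l args B)) :
    Letter.prd p l args true :: (x ++ σ) ∈ PrePaths (.whil p l args B) := by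
  obtain ⟨y, hσ, hy⟩ := h
  exact ⟨_, List.cons_prefix_cons.2 ⟨rfl, (List.prefix_append_right_inj x).2 hσ⟩,
    paths_whil_step hx hy⟩

lemma prePaths_whil_test (p l : ℕ) (args : List ℕ) (B : Schema) (b : Bool) :
    [Letter.prd p l args b] ∈ PrePaths (.whil p l args B) := by
  cases b with
  | true => exact prePaths_whil_body (nil_mem_prePaths B)
  | false => exact ⟨_, List.prefix_rfl, 0, rfl⟩

lemma prePaths_ite_test (p l : ℕ) (args : List ℕ) (A B : Schema) (b : Bool) :
    [Letter.prd p l args b] ∈ PrePaths (.ite p l args A B) := by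
  cases b with
  | true => exact prePaths_ite_true (nil_mem_prePaths A)
  | false => exact prePaths_ite_false (nil_mem_prePaths B)

lemma snoc_prefix_append {σ x y : List Letter} {a : Letter} (h : σ ++ [a] <+: x ++ y) :
    σ ++ [a] <+: x ∨ ∃ ρ, σ = x ++ ρ ∧ ρ ++ [a] <+: y := by
  rcases List.prefix_or_prefix_of_prefix h (List.prefix_append x y) with h1 | h1
  · exact Or.inl h1
  · rcases List.prefix_concat_iff.1 h1 with h2 | ⟨ρ, rfl⟩
    · exact Or.inl (h2 ▸ List.prefix_rfl)
    · refine Or.inr ⟨ρ, rfl, ?_⟩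
      rw [List.append_assoc] at h
      exact (List.prefix_append_right_inj x).1 h

/-- Whenever a path prefix ends with a test, the opposite outcome of that test also gives a path
prefix. -/
lemma toggle (S : Schema) (p l : ℕ) (args : List ℕ) (b b' : Bool) (σ : List Letter)
    (h : σ ++ [Letter.prd p l args b] ∈ PrePaths S) :
    σ ++ [Letter.prd p l args b'] ∈ PrePaths S := by
  induction S generalizing σ with
  | skip =>
    obtain ⟨τ, hσ, hτ⟩ := h
    obtain rfl : τ = [] := hτ
    simp at hσ
  | assign y f m brgs =>
    obtain ⟨τ, hσ, hτ⟩ := h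
    obtain rfl : τ = [_] := hτ
    cases σ <;> simp at hσ
  | seq A B hA hB =>
    obtain ⟨τ, hσ, x, hx, y, hy, rfl⟩ := h
    rcases snoc_prefix_append hσ with h1 | ⟨ρ, rfl, h1⟩
    · exact prePaths_seq_left (hA _ ⟨x, h1, hx⟩)
    · rw [List.append_assoc]
      exact prePaths_seq_right hx (hB _ ⟨y, h1, hy⟩)
  | ite q m brgs A B hA hB =>
    obtain ⟨τ, hσ, ⟨x, hx, rfl⟩ | ⟨x, hx, rfl⟩⟩ := h
    all_goals
      cases σ with
      | nil =>
        simp at hσ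
        obtain ⟨rfl, rfl, rfl, -⟩ := hσ
        exact prePaths_ite_test _ _ _ _ _ _
      | cons c σ =>
        rw [List.cons_append, List.cons_prefix_cons] at hσ
        obtain ⟨rfl, hσ⟩ := hσ
        first
          | exact prePaths_ite_true (hA _ ⟨x, hσ, hx⟩)
          | exact prePaths_ite_false (hB _ ⟨x, hσ, hx⟩)
  | whil q m brgs B hB =>
    obtain ⟨τ, hσ, n, hτ⟩ := h
    induction n generalizing σ τ with
    | zero =>
      obtain rfl : τ = [_] := hτ
      cases σ with
      | nil =>
        simp at hσ
        obtain ⟨rfl, rfl, rfl, -⟩ := hσ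
        exact prePaths_whil_test _ _ _ _ _
      | cons c σ => simp at hσ
    | succ n ih =>
      obtain ⟨x, hx, y, hy, rfl⟩ := hτ
      cases σ with
      | nil =>
        simp at hσ
        obtain ⟨rfl, rfl, rfl, -⟩ := hσ
        exact prePaths_whil_test _ _ _ _ _
      | cons c σ =>
        rw [List.cons_append, List.cons_prefix_cons] at hσ
        obtain ⟨rfl, hσ⟩ := hσ
        rcases snoc_prefix_append hσ with h1 | ⟨ρ, rfl, h1⟩
        · exact prePaths_whil_body (hB _ ⟨x, h1, hx⟩)
        · rw [List.cons_append, List.append_assoc]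
          exact prePaths_whil_step hx (ih _ y h1 hy)

/-! ### Execution along a path -/

/-- The predicate terms `p(t⃗)` tested along `σ`, executed from the state `d`, in order. -/
def tests {D : Type} (I : Interp D) : (ℕ → D) → List Letter → List (ℕ × List D)
  | _, [] => []
  | d, .asn y f l args :: σ => tests I (stepL I d (.asn y f l args)) σ
  | d, .prd p _ args _ :: σ => (p, args.map d) :: tests I d σ

lemma tests_append {D : Type} (I : Interp D) (d : ℕ → D) (σ τ : List Letter) :
    tests I d (σ ++ τ) = tests I d σ ++ tests I (execP I d σ) τ := by
  induction σ generalizing d with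
  | nil => rfl
  | cons a σ ih => cases a <;> simp [tests, ih, execP, stepL]

lemma agrees_nil {D : Type} (I : Interp D) (d : ℕ → D) : Agrees I d [] := by
  intro τ p l args b h
  simp at h

lemma agrees_append {D : Type} {I : Interp D} {d : ℕ → D} {σ τ : List Letter}
    (hσ : Agrees I d σ) (hτ : Agrees I (execP I d σ) τ) : Agrees I d (σ ++ τ) := by
  intro ρ p l args b h
  rcases snoc_prefix_append h with h1 | ⟨ρ, rfl, h1⟩
  · exact hσ _ _ _ _ _ h1
  · have := hτ _ _ _ _ _ h1
    simpa [execP] using this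

lemma agrees_asn {D : Type} (I : Interp D) (d : ℕ → D) (y f l : ℕ) (args : List ℕ) :
    Agrees I d [.asn y f l args] := by
  intro τ p l args b h
  cases τ <;> simp at h

lemma agrees_prd_cons {D : Type} {I : Interp D} {d : ℕ → D} {p l : ℕ} {args : List ℕ} {b : Bool}
    {σ : List Letter} (hb : I.pr p (args.map d) = b) (hσ : Agrees I d σ) :
    Agrees I d (.prd p l args b :: σ) := by
  intro τ q m brgs c h
  cases τ with
  | nil =>
    simp at h
    obtain ⟨rfl, rfl, rfl, rfl⟩ := h
    exact hb
  | cons a τ =>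
    rw [List.cons_append, List.cons_prefix_cons] at h
    obtain ⟨rfl, h1⟩ := h
    have := hσ _ _ _ _ _ h1
    simpa [execP, stepL] using this

lemma agrees_mono {D : Type} {I : Interp D} {d : ℕ → D} {σ τ : List Letter}
    (h : Agrees I d τ) (hσ : σ <+: τ) : Agrees I d σ :=
  fun _ _ _ _ _ hρ => h _ _ _ _ _ (hρ.trans hσ)

lemma execP_herb (i j : HInterp) (d : ℕ → Trm) (σ : List Letter) :
    execP (herb i) d σ = execP (herb j) d σ := by
  have h : stepL (herb i) = stepL (herb j) := by
    funext d a
    cases a <;> rfl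
  simp [execP, h]

lemma tests_herb (i j : HInterp) (d : ℕ → Trm) (σ : List Letter) :
    tests (herb i) d σ = tests (herb j) d σ := by
  induction σ generalizing d with
  | nil => rfl
  | cons a σ ih =>
    cases a with
    | asn y f l args => exact ih _
    | prd p l args b => exact congrArg _ (ih _)

/-- Two Herbrand interpretations consistent with the same path agree on all terms it tests. -/
lemma eq_of_mem_tests {i j : HInterp} {σ : List Letter} (hi : hAgrees i σ) (hj : hAgrees j σ)
    {q : ℕ × List Trm} (hq : q ∈ tests (herb i) eSt σ) : i q.1 q.2 = j q.1 q.2 := by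
  induction σ using List.reverseRecOn with
  | nil => simp [tests] at hq
  | append_singleton σ a ih =>
    rw [tests_append, List.mem_append] at hq
    rcases hq with hq | hq
    · exact ih (agrees_mono hi (List.prefix_append _ _))
        (agrees_mono hj (List.prefix_append _ _)) hq
    · cases a with
      | asn y f l args => simp [tests] at hq
      | prd p l args b =>
        simp only [tests, List.mem_singleton] at hq
        subst hq
        have h1 := hi σ p l args b List.prefix_rfl
        have h2 := hj σ p l args b List.prefix_rfl
        rw [execP_herb j i] at h2
        exact h1.trans h2.symm

/-- In a free schema no predicate term is tested twice along a path. -/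
lemma nodup_tests {S : Schema} (hF : Free S) (i : HInterp) (σ : List Letter)
    (hσ : σ ∈ PrePaths S) : (tests (herb i) eSt σ).Nodup := by
  induction σ using List.reverseRecOn with
  | nil => simp [tests]
  | append_singleton σ a ih =>
    have hσ' : σ ∈ PrePaths S := by
      obtain ⟨τ, h, hτ⟩ := hσ
      exact ⟨τ, (List.prefix_append _ _).trans h, hτ⟩
    rw [tests_append]
    cases a with
    | asn y f l args => simpa [tests] using ih hσ'
    | prd p l args b =>
      refine List.nodup_append'.2 ⟨ih hσ', by simp [tests], ?_⟩
      intro q hq hq'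
      simp only [tests, List.mem_singleton] at hq'
      subst hq'
      obtain ⟨i₁, h₁⟩ := hF _ hσ
      obtain ⟨i₂, h₂⟩ := hF _ (toggle S p l args b (!b) σ hσ)
      rw [tests_herb i i₁] at hq
      have h := eq_of_mem_tests (agrees_mono h₁ (List.prefix_append _ _))
        (agrees_mono h₂ (List.prefix_append _ _)) hq
      have e₁ := h₁ σ p l args b List.prefix_rfl
      have e₂ := h₂ σ p l args (!b) List.prefix_rfl
      rw [execP_herb _ i] at e₁ e₂
      have e₁' : i₁ p (args.map (execP (herb i) eSt σ)) = b := e₁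
      have e₂' : i₂ p (args.map (execP (herb i) eSt σ)) = !b := e₂
      simp only [e₁', e₂'] at h
      cases b <;> simp at h

/-! ### Nonterminating runs -/

open Classical in
/-- The number of tests along `σ`, executed from `d`, of predicates in `W` that `I` makes true. -/
noncomputable def trueTests {D : Type} (W : Set ℕ) (I : Interp D) (d : ℕ → D)
    (σ : List Letter) : ℕ :=
  ((tests I d σ).filter fun q => q.1 ∈ W ∧ I.pr q.1 q.2 = true).length

lemma trueTests_append {D : Type} (W : Set ℕ) (I : Interp D) (d : ℕ → D) (σ τ : List Letter) :
    trueTests W I d (σ ++ τ) = trueTests W I d σ + trueTests W I (execP I d σ) τ := by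
  simp [trueTests, tests_append]

lemma trueTests_prd_cons {D : Type} (W : Set ℕ) (I : Interp D) (d : ℕ → D) (p l : ℕ)
    (args : List ℕ) (b : Bool) (σ : List Letter) :
    trueTests W I d σ ≤ trueTests W I d (.prd p l args b :: σ) := by
  simp only [trueTests, tests, List.filter_cons]
  split <;> simp

lemma trueTests_prd_cons_true {D : Type} {W : Set ℕ} {I : Interp D} {d : ℕ → D} {p : ℕ} (l : ℕ)
    {args : List ℕ} (b : Bool) (σ : List Letter) (hW : p ∈ W) (h : I.pr p (args.map d) = true) :
    trueTests W I d (.prd p l args b :: σ) = trueTests W I d σ + 1 := by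
  simp [trueTests, tests, hW, h]

/-- If `W` contains the while predicates of `T`, then `T` either terminates or makes at least `n`
successful tests of predicates in `W` along its run, for any prescribed `n`. -/
lemma terminates_or_long {D : Type} (W : Set ℕ) (I : Interp D) (T : Schema)
    (hW : ∀ p l args B, Occurs (.whil p l args B) T → p ∈ W) (n : ℕ) (d : ℕ → D) :
    Terminates T I d ∨ ∃ σ ∈ PrePaths T, Agrees I d σ ∧ n ≤ trueTests W I d σ := by
  induction T generalizing d n with
  | skip => exact Or.inl ⟨[], rfl, agrees_nil _ _⟩
  | assign y f l args => exact Or.inl ⟨_, rfl, agrees_asn _ _ _ _ _ _⟩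
  | seq A B hA hB =>
    rcases hA (fun p l args C h => hW p l args C h.seqL) n d with ⟨x, hx, hxa⟩ | ⟨σ, h1, h2, h3⟩
    · rcases hB (fun p l args C h => hW p l args C h.seqR) n (execP I d x) with
        ⟨y, hy, hya⟩ | ⟨σ, h1, h2, h3⟩
      · exact Or.inl ⟨x ++ y, ⟨x, hx, y, hy, rfl⟩, agrees_append hxa hya⟩
      · refine Or.inr ⟨x ++ σ, prePaths_seq_right hx h1, agrees_append hxa h2, ?_⟩
        rw [trueTests_append]
        omega
    · exact Or.inr ⟨σ, prePaths_seq_left h1, h2, h3⟩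
  | ite p l args A B hA hB =>
    cases hp : I.pr p (args.map d) with
    | true =>
      rcases hA (fun p l args C h => hW p l args C h.iteT) n d with ⟨x, hx, hxa⟩ | ⟨σ, h1, h2, h3⟩
      · exact Or.inl ⟨_, Or.inl ⟨x, hx, rfl⟩, agrees_prd_cons hp hxa⟩
      · exact Or.inr ⟨_, prePaths_ite_true h1, agrees_prd_cons hp h2,
          h3.trans (trueTests_prd_cons _ _ _ _ _ _ _ _)⟩
    | false =>
      rcases hB (fun p l args C h => hW p l args C h.iteF) n d with ⟨x, hx, hxa⟩ | ⟨σ, h1, h2, h3⟩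
      · exact Or.inl ⟨_, Or.inr ⟨x, hx, rfl⟩, agrees_prd_cons hp hxa⟩
      · exact Or.inr ⟨_, prePaths_ite_false h1, agrees_prd_cons hp h2,
          h3.trans (trueTests_prd_cons _ _ _ _ _ _ _ _)⟩
  | whil p l args B hB =>
    have hpW : p ∈ W := hW p l args B (.refl _)
    -- Each iteration of the loop contributes one successful test, so `n` decreases per iteration.
    induction n generalizing d with
    | zero => exact Or.inr ⟨[], nil_mem_prePaths _, agrees_nil _ _, Nat.zero_le _⟩
    | succ n ih =>
      cases hp : I.pr p (args.map d) with
      | false => exact Or.inl ⟨_, ⟨0, rfl⟩, agrees_prd_cons hp (agrees_nil _ _)⟩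
      | true =>
        rcases hB (fun p l args C h => hW p l args C h.whilB) (n + 1) d with
          ⟨x, hx, hxa⟩ | ⟨σ, h1, h2, h3⟩
        · rcases ih (execP I d x) with ⟨y, hy, hya⟩ | ⟨σ, h1, h2, h3⟩
          · exact Or.inl ⟨_, paths_whil_step hx hy, agrees_prd_cons hp (agrees_append hxa hya)⟩
          · refine Or.inr ⟨_, prePaths_whil_step hx h1,
              agrees_prd_cons hp (agrees_append hxa h2), ?_⟩
            rw [trueTests_prd_cons_true l true _ hpW hp, trueTests_append]
            omega
        · exact Or.inr ⟨_, prePaths_whil_body h1, agrees_prd_cons hp h2,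
            h3.trans (trueTests_prd_cons _ _ _ _ _ _ _ _)⟩

lemma terminates_of_finite_while {S : Schema} (hF : Free S) (j : HInterp)
    (hfin : {pt : ℕ × List Trm | (∃ l, IsWhilePred S pt.1 l) ∧ j pt.1 pt.2 = true}.Finite) :
    Terminates S (herb j) eSt := by
  classical
  rcases terminates_or_long {p | ∃ l, IsWhilePred S p l} (herb j) S
    (fun p l args B h => ⟨l, args, B, h⟩) (hfin.toFinset.card + 1) eSt with h | ⟨σ, h1, -, h3⟩
  · exact h
  · exfalso
    unfold trueTests at h3
    rw [← List.toFinset_card_of_nodup ((nodup_tests hF j σ h1).filter _)] at h3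
    have hle := h3.trans (Finset.card_le_card (t := hfin.toFinset) fun q hq => by
      rw [List.mem_toFinset] at hq
      rw [Set.Finite.mem_toFinset]
      exact of_decide_eq_true (List.mem_filter.1 hq).2)
    omega

/-- (1) in a free schema, a Herbrand interpretation mapping only
finitely many predicate terms to true defines a terminating path; (2) if the
schema is moreover predicate-linear, a Herbrand interpretation mapping only
finitely many while-predicate terms to true defines a terminating path. -/
theorem finitely_many_true_terminates (S : Schema) (hF : Free S) :
    (∀ i : HInterp, {pt : ℕ × List Trm | i pt.1 pt.2 = true}.Finite →
      Terminates S (herb i) eSt) ∧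
    (PredLinear S → ∀ j : HInterp,
      {pt : ℕ × List Trm | (∃ l, IsWhilePred S pt.1 l) ∧ j pt.1 pt.2 = true}.Finite →
      Terminates S (herb j) eSt) :=
  ⟨fun i hi => terminates_of_finite_while hF i (hi.subset fun _ h => h.2),
    fun _ j hj => terminates_of_finite_while hF j hj⟩

end SchemaSlicing
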